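/- arXiv:2102.07486 — 10 statements merged into one kernel-verified Lean document; each statement's English description precedes it below -/
import Mathlib

section
/- Let A and B be 0,1-matrices, and let M be a 0,1-matrix of Boolean rank 1 such that M ≼ A ⊗ B. Then there exist 0,1-matrices M_A and M_B of Boolean rank 1 satisfying M_A ≼ A, M_B ≼ B, and M ≼ M_A ⊗ M_B. -/
/-!
Write the 1-entries of `M` as a rectangle `X × Y` with `X`, `Y` sets of pairs. The projections
`X₁ × Y₁` and `X₂ × Y₂` to the two factors work: a pair `(i, j) ∈ X₁ × Y₁` lifts to some
`x ∈ X` and `y ∈ Y`, and since the 1-entries form a rectangle, `(x, y)` is a 1-entry of `M`,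
hence of `A ⊗ B`, so `A i j = 1`; likewise for `B`.
-/

/-- A collection of `s` Boolean matrices covers `A` if `A` has a 1 exactly where some
matrix of the collection has a 1. -/
def BCovers {α β : Type*} {s : ℕ} (M : Fin s → Matrix α β Bool) (A : Matrix α β Bool) : Prop :=
  ∀ i j, A i j = true ↔ ∃ t, M t i j = true

/-- A nonzero Boolean matrix whose 1-entries form a combinatorial rectangle. -/
def IsRank1 {α β : Type*} (M : Matrix α β Bool) : Prop :=
  (∃ i j, M i j = true) ∧ ∃ u : α → Bool, ∃ v : β → Bool, ∀ i j, M i j = (u i && v j)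

/-- The Boolean rank of a 0,1-matrix: the smallest `s` such that `A` is the entrywise
Boolean sum (OR) of `s` matrices of Boolean rank 1. -/
noncomputable def RB {α β : Type*} (A : Matrix α β Bool) : ℕ :=
  sInf {s | ∃ M : Fin s → Matrix α β Bool, (∀ t, IsRank1 (M t)) ∧ BCovers M A}

/-- The Kronecker product of Boolean matrices. -/
def bkron {α β γ δ : Type*} (A : Matrix α β Bool) (B : Matrix γ δ Bool) :
    Matrix (α × γ) (β × δ) Bool :=
  fun i j => A i.1 j.1 && B i.2 j.2

/-- The n × n matrix with zeros on the diagonal and ones everywhere else. -/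
def Cmat (n : ℕ) : Matrix (Fin n) (Fin n) Bool := fun i j => decide (i ≠ j)

/-- σ(n): the smallest k with n ≤ binom(k, ⌈k/2⌉). -/
noncomputable def sigmaFn (n : ℕ) : ℕ := sInf {k | n ≤ Nat.choose k ((k + 1) / 2)}

/-- (a₁,a₂,a₃)-coverability: three matrices of the given Boolean ranks, every two of
which cover `A`. -/
def Coverable3 {α β : Type*} (A : Matrix α β Bool) (a1 a2 a3 : ℕ) : Prop :=
  ∃ A1 A2 A3 : Matrix α β Bool,
    RB A1 ≤ a1 ∧ RB A2 ≤ a2 ∧ RB A3 ≤ a3 ∧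
    (∀ i j, A i j = true ↔ (A1 i j = true ∨ A2 i j = true)) ∧
    (∀ i j, A i j = true ↔ (A1 i j = true ∨ A3 i j = true)) ∧
    (∀ i j, A i j = true ↔ (A2 i j = true ∨ A3 i j = true))

/-- The number of 1-entries of a Boolean matrix. -/
def ones {α β : Type*} [Fintype α] [Fintype β] (A : Matrix α β Bool) : ℕ :=
  (Finset.univ.filter (fun p : α × β => A p.1 p.2 = true)).card

/-- The largest number of 1-entries in a monochromatic rectangle of ones of `A`. -/
noncomputable def maxRect {α β : Type*} [Fintype α] [Fintype β] (A : Matrix α β Bool) : ℕ :=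
  sSup {c | ∃ M : Matrix α β Bool,
    IsRank1 M ∧ (∀ i j, M i j = true → A i j = true) ∧ c = ones M}

theorem rank_one_sub_kronecker {n m p q : ℕ}
    (A : Matrix (Fin n) (Fin m) Bool) (B : Matrix (Fin p) (Fin q) Bool)
    (M : Matrix (Fin n × Fin p) (Fin m × Fin q) Bool) (hM : IsRank1 M)
    (hle : ∀ i j, M i j = true → bkron A B i j = true) :
    ∃ MA : Matrix (Fin n) (Fin m) Bool, ∃ MB : Matrix (Fin p) (Fin q) Bool,
      IsRank1 MA ∧ IsRank1 MB ∧
      (∀ i j, MA i j = true → A i j = true) ∧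
      (∀ i j, MB i j = true → B i j = true) ∧
      (∀ i j, M i j = true → bkron MA MB i j = true) := by
  obtain ⟨⟨i₀, j₀, h₀⟩, u, v, huv⟩ := hM
  have key : ∀ x y, u x = true → v y = true → A x.1 y.1 = true ∧ B x.2 y.2 = true := by
    intro x y hx hy
    simpa [bkron] using hle x y (by simp [huv, hx, hy])
  have split : ∀ i j, M i j = true → u i = true ∧ v j = true := by
    intro i j h
    simpa [huv] using h
  obtain ⟨hu₀, hv₀⟩ := split i₀ j₀ h₀
  classical
  refine ⟨fun i j => decide (∃ k, u (i, k) = true) && decide (∃ l, v (j, l) = true),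
    fun k l => decide (∃ i, u (i, k) = true) && decide (∃ j, v (j, l) = true),
    ⟨⟨i₀.1, j₀.1, ?_⟩, _, _, fun _ _ => rfl⟩, ⟨⟨i₀.2, j₀.2, ?_⟩, _, _, fun _ _ => rfl⟩, ?_, ?_, ?_⟩
  · simp only [Bool.and_eq_true, decide_eq_true_eq]
    exact ⟨⟨_, hu₀⟩, ⟨_, hv₀⟩⟩
  · simp only [Bool.and_eq_true, decide_eq_true_eq]
    exact ⟨⟨_, hu₀⟩, ⟨_, hv₀⟩⟩
  · intro i j h
    simp only [Bool.and_eq_true, decide_eq_true_eq] at h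
    obtain ⟨⟨k, hk⟩, ⟨l, hl⟩⟩ := h
    exact (key _ _ hk hl).1
  · intro k l h
    simp only [Bool.and_eq_true, decide_eq_true_eq] at h
    obtain ⟨⟨i, hi⟩, ⟨j, hj⟩⟩ := h
    exact (key _ _ hi hj).2
  · intro i j h
    obtain ⟨hi, hj⟩ := split i j h
    simp only [bkron, Bool.and_eq_true, decide_eq_true_eq]
    exact ⟨⟨⟨_, hi⟩, ⟨_, hj⟩⟩, ⟨⟨_, hi⟩, ⟨_, hj⟩⟩⟩
end

section
/- Let A and B be two 0,1-matrices. Suppose that there exist two families of 0,1-matrices, M = {M_1, …, M_s} (each of the same dimensions as A) and N = {N_1, …, N_s} (each of the same dimensions as B), such that (1) M is a cover of A, and (2) for every entry (i,j) with A_{i,j} = 1, the matrices N_t with (M_t)_{i,j} = 1 form a cover of B. Then R_B(A ⊗ B) ≤ Σ_{t=1}^{s} R_B(M_t) · R_B(N_t). -/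
/-- A rectangle cover indexed by any finite type bounds the Boolean rank. -/
theorem RB_le_card {α β ι : Type*} [Fintype ι] {A : Matrix α β Bool} (F : ι → Matrix α β Bool)
    (hF : ∀ k, IsRank1 (F k)) (hA : ∀ i j, A i j = true ↔ ∃ k, F k i j = true) :
    RB A ≤ Fintype.card ι := by
  refine Nat.sInf_le ⟨fun t => F ((Fintype.equivFin ι).symm t), fun t => hF _, fun i j => ?_⟩
  rw [hA i j]
  exact ((Fintype.equivFin ι).symm.surjective.exists (p := fun k => F k i j = true))

/-- The minimum in the definition of `RB` is attained. -/
theorem exists_cover_RB {α β : Type*} [Fintype α] [Fintype β] (A : Matrix α β Bool) :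
    ∃ F : Fin (RB A) → Matrix α β Bool, (∀ t, IsRank1 (F t)) ∧ BCovers F A := by
  classical
  -- The infimum of a nonempty set of naturals is a member; one rectangle per 1-entry works.
  refine Nat.sInf_mem (s := {s | ∃ F : Fin s → Matrix α β Bool,
    (∀ t, IsRank1 (F t)) ∧ BCovers F A}) ?_
  let e := Fintype.equivFin {x : α × β // A x.1 x.2 = true}
  refine ⟨_, fun t i j => decide (i = (e.symm t).1.1) && decide (j = (e.symm t).1.2),
    fun t => ⟨⟨(e.symm t).1.1, (e.symm t).1.2, by simp⟩, fun i => decide (i = (e.symm t).1.1),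
      fun j => decide (j = (e.symm t).1.2), fun i j => rfl⟩, fun i j => ⟨fun h => ?_, ?_⟩⟩
  · exact ⟨e ⟨(i, j), h⟩, by simp⟩
  · rintro ⟨t, ht⟩
    simp only [Bool.and_eq_true, decide_eq_true_eq] at ht
    rw [ht.1, ht.2]
    exact (e.symm t).2

theorem IsRank1.bkron {α β γ δ : Type*} {A : Matrix α β Bool} {B : Matrix γ δ Bool}
    (hA : IsRank1 A) (hB : IsRank1 B) : IsRank1 (bkron A B) := by
  obtain ⟨⟨i, j, hij⟩, u, v, huv⟩ := hA
  obtain ⟨⟨k, l, hkl⟩, w, z, hwz⟩ := hB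
  refine ⟨⟨(i, k), (j, l), by simp [_root_.bkron, hij, hkl]⟩,
    fun x => u x.1 && w x.2, fun y => v y.1 && z y.2, fun x y => ?_⟩
  simp only [_root_.bkron, huv, hwz]
  ac_rfl

theorem rank_kronecker_upper_bound {n m p q s : ℕ}
    (A : Matrix (Fin n) (Fin m) Bool) (B : Matrix (Fin p) (Fin q) Bool)
    (M : Fin s → Matrix (Fin n) (Fin m) Bool) (N : Fin s → Matrix (Fin p) (Fin q) Bool)
    (hM : BCovers M A)
    (hN : ∀ i j, A i j = true →
      ∀ i' j', B i' j' = true ↔ ∃ t, M t i j = true ∧ N t i' j' = true) :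
    RB (bkron A B) ≤ ∑ t, RB (M t) * RB (N t) := by
  choose F hF hFM using fun t => exists_cover_RB (M t)
  choose G hG hGN using fun t => exists_cover_RB (N t)
  have key := RB_le_card (A := bkron A B)
    (fun k : Σ t, Fin (RB (M t)) × Fin (RB (N t)) => bkron (F k.1 k.2.1) (G k.1 k.2.2))
    (fun k => (hF _ _).bkron (hG _ _)) ?_
  · simpa using key
  rintro ⟨i, i'⟩ ⟨j, j'⟩
  simp only [bkron, Bool.and_eq_true]
  constructor
  · rintro ⟨hA, hB⟩
    obtain ⟨t, hMt, hNt⟩ := (hN i j hA i' j').1 hB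
    obtain ⟨a, ha⟩ := (hFM t i j).1 hMt
    obtain ⟨b, hb⟩ := (hGN t i' j').1 hNt
    exact ⟨⟨t, a, b⟩, ha, hb⟩
  · rintro ⟨⟨t, a, b⟩, ha, hb⟩
    have hMt := (hFM t i j).2 ⟨a, ha⟩
    have hA := (hM i j).2 ⟨t, hMt⟩
    exact ⟨hA, (hN i j hA i' j').2 ⟨t, hMt, (hGN t i' j').2 ⟨b, hb⟩⟩⟩
end

section
/- Let k ≥ 2 be an integer and let ℓ = ⌈k/2⌉. Then there exists a bijection g from the family of all (ℓ−1)-element subsets of [k−1] = {1, …, k−1} to itself satisfying F ∩ g(F) = ∅ for every (ℓ−1)-element subset F of [k−1]. -/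
theorem exists_disjoint_bijection (k : ℕ) (hk : 2 ≤ k) :
    ∃ g : Finset (Fin (k - 1)) → Finset (Fin (k - 1)),
      Set.BijOn g {F : Finset (Fin (k - 1)) | F.card = (k + 1) / 2 - 1}
        {F : Finset (Fin (k - 1)) | F.card = (k + 1) / 2 - 1} ∧
      ∀ F : Finset (Fin (k - 1)), F.card = (k + 1) / 2 - 1 → F ∩ g F = ∅ := by
  classical
  have hr : 2 * ((k + 1) / 2 - 1) ≤ k - 1 := by omega
  generalize (k + 1) / 2 - 1 = r at hr ⊢
  generalize k - 1 = n at hr ⊢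
  have hpos : 0 < (n - r).choose r := Nat.choose_pos (by omega)
  -- The neighbours of `F` are the `r`-subsets of its complement.
  let t : {F : Finset (Fin n) // F.card = r} → Finset (Finset (Fin n)) :=
    fun F => Finset.powersetCard r F.1ᶜ
  have hall : ∀ s : Finset {F : Finset (Fin n) // F.card = r},
      s.card ≤ (s.biUnion t).card := by
    intro s
    refine Nat.le_of_mul_le_mul_right ?_ hpos
    refine Finset.card_mul_le_card_mul (fun F G => G ∈ t F) ?_ ?_
    · intro F hF
      have h : Finset.bipartiteAbove (fun F G => G ∈ t F) (s.biUnion t) F = t F := by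
        ext G
        simp only [Finset.mem_bipartiteAbove, Finset.mem_biUnion]
        exact ⟨fun h => h.2, fun h => ⟨⟨F, hF, h⟩, h⟩⟩
      rw [h]
      simp [t, Finset.card_compl, F.2]
    · intro G hG
      obtain ⟨F₀, -, hG₀⟩ := Finset.mem_biUnion.1 hG
      have hGc : G.card = r := (Finset.mem_powersetCard.1 hG₀).2
      have hc : (Finset.powersetCard r Gᶜ).card = (n - r).choose r := by
        simp [Finset.card_compl, hGc]
      rw [← hc]
      refine Finset.card_le_card_of_injOn Subtype.val ?_ Subtype.val_injective.injOn
      intro F hF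
      have h := (Finset.mem_powersetCard.1 (Finset.mem_bipartiteBelow _ |>.1 hF).2).1
      exact Finset.mem_coe.2 (Finset.mem_powersetCard.2 ⟨Finset.subset_compl_comm.1 h, F.2⟩)
  obtain ⟨f, hf, hft⟩ := (Finset.all_card_le_biUnion_card_iff_exists_injective t).1 hall
  have hft' := fun F => Finset.mem_powersetCard.1 (hft F)
  refine ⟨fun F => if h : F.card = r then f ⟨F, h⟩ else ∅, ?_, ?_⟩
  · refine ((Set.toFinite _).injOn_iff_bijOn_of_mapsTo ?_).1 ?_
    · intro F (hF : F.card = r)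
      simpa [hF] using (hft' ⟨F, hF⟩).2
    · intro F (hF : F.card = r) G (hG : G.card = r) h
      simp only [hF, hG, dif_pos] at h
      exact congrArg Subtype.val (hf h)
  · intro F hF
    simp only [hF, dif_pos]
    exact Finset.disjoint_iff_inter_eq_empty.1
      (Finset.subset_compl_iff_disjoint_left.1 (hft' ⟨F, hF⟩).1)
end

section
/- Let k ≥ 5 be an integer, let i ∈ [k] = {1, …, k}, let ℓ = ⌈k/2⌉, and let F be the family of all ℓ-element subsets of [k]. Then there exists an {i}-preserving and {i}-intersection-shifting bijection h : F → F. -/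
/-- `h` is `L`-preserving on the family `F`: it preserves intersections with `L`. -/
def Preserving {k : ℕ} (F : Finset (Finset (Fin k))) (L : Finset (Fin k))
    (h : Finset (Fin k) → Finset (Fin k)) : Prop :=
  ∀ D ∈ F, D ∩ L = h D ∩ L

/-- `h` is `L`-intersection shifting on the family `F`. -/
def IntersectionShifting {k : ℕ} (F : Finset (Finset (Fin k))) (L : Finset (Fin k))
    (h : Finset (Fin k) → Finset (Fin k)) : Prop :=
  ∀ D ∈ F, ∀ E ∈ F, (D ∩ Eᶜ).Nonempty → D ∩ Eᶜ ⊆ L → ((h D ∩ (h E)ᶜ) \ L).Nonempty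

/-- The sets of size `|D|` that meet `D` exactly in `i`, for `i ∈ D`: each consists of `i` and
`|D| - 1` points outside `D`. -/
def partners {k : ℕ} (i : Fin k) (D : Finset (Fin k)) : Finset (Finset (Fin k)) :=
  (Finset.powersetCard (D.card - 1) Dᶜ).image (insert i)

lemma mem_partners {k : ℕ} {i : Fin k} {D E : Finset (Fin k)} (hi : i ∈ D) :
    E ∈ partners i D ↔ i ∈ E ∧ E.card = D.card ∧ D ∩ E = {i} := by
  have hpos : 0 < D.card := Finset.card_pos.2 ⟨i, hi⟩
  simp only [partners, Finset.mem_image, Finset.mem_powersetCard]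
  constructor
  · rintro ⟨A, ⟨hA, hc⟩, rfl⟩
    have hiA : i ∉ A := fun h => Finset.mem_compl.1 (hA h) hi
    refine ⟨Finset.mem_insert_self _ _, by rw [Finset.card_insert_of_notMem hiA]; omega, ?_⟩
    ext x
    have := @hA x
    simp only [Finset.mem_compl] at this
    simp only [Finset.mem_inter, Finset.mem_insert, Finset.mem_singleton]
    grind
  · rintro ⟨hiE, hc, hDE⟩
    refine ⟨E.erase i, ⟨fun x hx => ?_, by rw [Finset.card_erase_of_mem hiE, hc]⟩,
      Finset.insert_erase hiE⟩
    rw [Finset.mem_erase] at hx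
    refine Finset.mem_compl.2 fun hxD => hx.1 ?_
    have : x ∈ D ∩ E := Finset.mem_inter.2 ⟨hxD, hx.2⟩
    rwa [hDE, Finset.mem_singleton] at this

lemma card_partners {k : ℕ} {i : Fin k} {D : Finset (Fin k)} (hi : i ∈ D) :
    (partners i D).card = (k - D.card).choose (D.card - 1) := by
  rw [partners, Finset.card_image_of_injOn, Finset.card_powersetCard, Finset.card_compl,
    Fintype.card_fin]
  intro A hA B hB hAB
  have key : ∀ C : Finset (Fin k),
      C ∈ (Finset.powersetCard (D.card - 1) Dᶜ : Set (Finset (Fin k))) → i ∉ C := fun C hC h =>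
    Finset.mem_compl.1 ((Finset.mem_powersetCard.1 (Finset.mem_coe.1 hC)).1 h) hi
  rw [← Finset.erase_insert (key A hA), ← Finset.erase_insert (key B hB)]
  exact congrArg (fun C => C.erase i) hAB

/-- Hall's condition holds because the relation `D ∩ E = {i}` is regular of positive degree. -/
lemma exists_injective_meeting_only_at {k l : ℕ} (i : Fin k) (hl : l - 1 ≤ k - l) :
    ∃ g : {D : Finset (Fin k) // i ∈ D ∧ D.card = l} → Finset (Fin k),
      Function.Injective g ∧ ∀ D, i ∈ g D ∧ (g D).card = l ∧ D.1 ∩ g D = {i} := by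
  obtain ⟨g, hg, hgt⟩ := (Finset.all_card_le_biUnion_card_iff_exists_injective
    (fun D : {D : Finset (Fin k) // i ∈ D ∧ D.card = l} => partners i D.1)).1 (by
      intro S
      have hpos : 0 < (k - l).choose (l - 1) := Nat.choose_pos hl
      refine Nat.le_of_mul_le_mul_right ?_ hpos
      refine Finset.card_mul_le_card_mul (fun D E => E ∈ partners i D.1) ?_ ?_
      · intro D hD
        have hc := card_partners D.2.1
        rw [D.2.2] at hc
        rw [← hc]
        refine Finset.card_le_card fun E hE => ?_
        exact Finset.mem_filter.2 ⟨Finset.mem_biUnion.2 ⟨D, hD, hE⟩, hE⟩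
      · intro E hE
        obtain ⟨D₀, -, hD₀⟩ := Finset.mem_biUnion.1 hE
        obtain ⟨hiE, hcE, -⟩ := (mem_partners D₀.2.1).1 hD₀
        rw [D₀.2.2] at hcE
        have hc := card_partners hiE
        rw [hcE] at hc
        rw [← hc]
        refine Finset.card_le_card_of_injOn Subtype.val ?_ Subtype.val_injective.injOn
        intro D hD
        obtain ⟨-, hD⟩ := Finset.mem_filter.1 (Finset.mem_coe.1 hD)
        have h := (mem_partners D.2.1).1 hD
        exact Finset.mem_coe.2 ((mem_partners hiE).2
          ⟨D.2.1, h.2.1.symm, by rw [Finset.inter_comm]; exact h.2.2⟩))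
  refine ⟨g, hg, fun D => ?_⟩
  have h := (mem_partners D.2.1).1 (hgt D)
  exact ⟨h.1, h.2.1.trans D.2.2, h.2.2⟩

theorem exists_preserving_shifting_bijection (k : ℕ) (hk : 5 ≤ k) (i : Fin k) :
    ∃ h : Finset (Fin k) → Finset (Fin k),
      Set.BijOn h {D : Finset (Fin k) | D.card = (k + 1) / 2}
        {D : Finset (Fin k) | D.card = (k + 1) / 2} ∧
      Preserving (Finset.univ.filter fun D : Finset (Fin k) => D.card = (k + 1) / 2) {i} h ∧
      IntersectionShifting
        (Finset.univ.filter fun D : Finset (Fin k) => D.card = (k + 1) / 2) {i} h := by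
  obtain ⟨l, hl⟩ : ∃ l, l = (k + 1) / 2 := ⟨_, rfl⟩
  rw [← hl]
  have hl3 : 3 ≤ l := by omega
  obtain ⟨g, hg, hgp⟩ := exists_injective_meeting_only_at (l := l) i (by omega)
  let h : Finset (Fin k) → Finset (Fin k) := fun D =>
    if hD : i ∈ D ∧ D.card = l then g ⟨D, hD⟩ else D
  have h_in : ∀ D (hD : i ∈ D ∧ D.card = l), h D = g ⟨D, hD⟩ := fun D hD => dif_pos hD
  have h_out : ∀ D, i ∉ D → h D = D := fun D hD => dif_neg fun h' => hD h'.1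
  have h_mem : ∀ D : Finset (Fin k), D.card = l → (i ∈ h D ↔ i ∈ D) := by
    intro D hD
    by_cases hi : i ∈ D
    · rw [h_in D ⟨hi, hD⟩]
      exact ⟨fun _ => hi, fun _ => (hgp _).1⟩
    · rw [h_out D hi]
  have h_maps : Set.MapsTo h {D : Finset (Fin k) | D.card = l} {D | D.card = l} := by
    intro D hD
    by_cases hi : i ∈ D
    · rw [h_in D ⟨hi, hD⟩]
      exact (hgp _).2.1
    · rwa [h_out D hi]
  have h_inj : Set.InjOn h {D : Finset (Fin k) | D.card = l} := by
    intro D hD E hE hDE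
    have hiff : i ∈ D ↔ i ∈ E := by rw [← h_mem D hD, ← h_mem E hE, hDE]
    by_cases hi : i ∈ D
    · rw [h_in D ⟨hi, hD⟩, h_in E ⟨hiff.1 hi, hE⟩] at hDE
      exact congrArg Subtype.val (hg hDE)
    · rwa [h_out D hi, h_out E (fun h' => hi (hiff.2 h'))] at hDE
  refine ⟨h, ((Set.toFinite _).injOn_iff_bijOn_of_mapsTo h_maps).1 h_inj, ?_, ?_⟩
  · intro D hD
    have hm := h_mem D (Finset.mem_filter.1 hD).2
    ext x
    simp only [Finset.mem_inter, Finset.mem_singleton]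
    constructor
    · rintro ⟨hx, rfl⟩
      exact ⟨hm.2 hx, rfl⟩
    · rintro ⟨hx, rfl⟩
      exact ⟨hm.1 hx, rfl⟩
  · intro D hD E hE hne hsub
    have hDc := (Finset.mem_filter.1 hD).2
    have hEc := (Finset.mem_filter.1 hE).2
    obtain ⟨x, hx⟩ := hne
    obtain rfl : x = i := Finset.mem_singleton.1 (hsub hx)
    obtain ⟨hiD, hiE⟩ := Finset.mem_inter.1 hx
    rw [Finset.mem_compl] at hiE
    obtain ⟨hig, hgc, hgD⟩ := hgp ⟨D, hiD, hDc⟩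
    rw [h_in D ⟨hiD, hDc⟩, h_out E hiE]
    set G := g ⟨D, hiD, hDc⟩
    by_contra hcon
    have hGE : G.erase x ⊆ E := by
      intro y hy
      obtain ⟨hyx, hyG⟩ := Finset.mem_erase.1 hy
      by_contra hyE
      exact hcon ⟨y, by simp [hyG, hyE, hyx]⟩
    have hDE : D.erase x ⊆ E := by
      intro y hy
      obtain ⟨hyx, hyD⟩ := Finset.mem_erase.1 hy
      by_contra hyE
      exact hyx (Finset.mem_singleton.1 (hsub (by simp [hyD, hyE])))
    have hdisj : Disjoint (D.erase x) (G.erase x) := by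
      rw [Finset.disjoint_left]
      intro y hy hy'
      obtain ⟨hyx, hyD⟩ := Finset.mem_erase.1 hy
      have hyI : y ∈ D ∩ G := Finset.mem_inter.2 ⟨hyD, (Finset.mem_erase.1 hy').2⟩
      rw [hgD] at hyI
      exact hyx (Finset.mem_singleton.1 hyI)
    have hle := Finset.card_le_card (Finset.union_subset hDE hGE)
    rw [Finset.card_union_of_disjoint hdisj, Finset.card_erase_of_mem hiD,
      Finset.card_erase_of_mem hig, hgc] at hle
    omega
end

section
/- For every integer n ≥ 7, the matrix C_n is (k−1, k−1, 1)-coverable, where k = σ(n). -/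
/-- Covering by possibly empty rectangles suffices to bound the Boolean rank: empty ones can be
dropped. -/
lemma RB_le_of_rectangles {α β : Type*} {s : ℕ} (A : Matrix α β Bool)
    (u : Fin s → α → Bool) (v : Fin s → β → Bool)
    (h : ∀ i j, A i j = true ↔ ∃ t, (u t i && v t j) = true) : RB A ≤ s := by
  classical
  let T := {t : Fin s // ∃ i j, (u t i && v t j) = true}
  have hT : Fintype.card T ≤ s := by
    exact (Fintype.card_subtype_le _).trans_eq (Fintype.card_fin s)
  let e := Fintype.equivFin T
  refine le_trans (Nat.sInf_le ?_) hT
  refine ⟨fun t i j => u (e.symm t).1 i && v (e.symm t).1 j,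
    fun t => ⟨(e.symm t).2, _, _, fun _ _ => rfl⟩, fun i j => ?_⟩
  rw [h]
  constructor
  · rintro ⟨t, ht⟩
    exact ⟨e ⟨t, i, j, ht⟩, by simpa using ht⟩
  · rintro ⟨t, ht⟩
    exact ⟨_, ht⟩

lemma RB_notSubset_le {ι : Type*} {m : ℕ} (F : ι → Finset (Fin m)) :
    RB (fun i j => decide (¬ F i ⊆ F j) : Matrix ι ι Bool) ≤ m := by
  refine RB_le_of_rectangles _ (fun t i => decide (t ∈ F i)) (fun t j => decide (t ∉ F j)) ?_
  intro i j
  simp [Finset.not_subset]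

/-- For `2r ≤ m`, the `r`-subsets of an `m`-set can be mapped injectively to `r`-subsets so that
each set is disjoint from its image. -/
lemma exists_disjoint_injection (m r : ℕ) (h : 2 * r ≤ m) :
    ∃ f : {U : Finset (Fin m) // U.card = r} → Finset (Fin m),
      Function.Injective f ∧ ∀ U, (f U).card = r ∧ Disjoint U.1 (f U) := by
  classical
  let t : {U : Finset (Fin m) // U.card = r} → Finset (Finset (Fin m)) :=
    fun U => Finset.powersetCard r U.1ᶜ
  have hd : 0 < (m - r).choose r := Nat.choose_pos (by omega)
  -- Hall's condition, by double counting disjoint pairs: all degrees equal `C(m - r, r)`.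
  have hall : ∀ s : Finset {U : Finset (Fin m) // U.card = r}, s.card ≤ (s.biUnion t).card := by
    intro s
    refine Nat.le_of_mul_le_mul_right (Finset.card_mul_le_card_mul
      (fun U V => Disjoint U.1 V) (m := (m - r).choose r) (n := (m - r).choose r) ?_ ?_) hd
    · intro U hU
      have : (t U).card = (m - r).choose r := by
        simp [t, Finset.card_compl, U.2]
      rw [← this]
      refine Finset.card_le_card fun V hV => ?_
      rw [Finset.mem_bipartiteAbove]
      refine ⟨Finset.mem_biUnion.2 ⟨U, hU, hV⟩, ?_⟩
      exact (Finset.subset_compl_iff_disjoint_left.1 (Finset.mem_powersetCard.1 hV).1)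
    · intro V hV
      obtain ⟨U, -, hU⟩ := Finset.mem_biUnion.1 hV
      have hVc : V.card = r := (Finset.mem_powersetCard.1 hU).2
      have : (Finset.powersetCard r Vᶜ).card = (m - r).choose r := by
        simp [Finset.card_compl, hVc]
      rw [← this]
      refine Finset.card_le_card_of_injOn Subtype.val (fun W hW => ?_)
        Subtype.val_injective.injOn
      have hW := (Finset.mem_bipartiteBelow _).1 (Finset.mem_coe.1 hW)
      exact Finset.mem_coe.2 (Finset.mem_powersetCard.2
        ⟨Finset.subset_compl_iff_disjoint_right.2 hW.2, W.2⟩)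
  obtain ⟨f, hf, hft⟩ := (Finset.all_card_le_biUnion_card_iff_exists_injective t).1 hall
  refine ⟨f, hf, fun U => ?_⟩
  have := Finset.mem_powersetCard.1 (hft U)
  exact ⟨this.2, Finset.subset_compl_iff_disjoint_left.1 this.1⟩

/-- In two consecutive levels, an inclusion between different members of an injective family goes
from the lower level to the upper one. -/
lemma card_of_subset_of_ne {ι : Type*} {m r : ℕ} (F : ι → Finset (Fin m))
    (hF : Function.Injective F) (hc : ∀ i, (F i).card = r ∨ (F i).card = r + 1)
    {i j : ι} (hij : i ≠ j) (h : F i ⊆ F j) : (F i).card = r ∧ (F j).card = r + 1 := by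
  have := Finset.card_lt_card (h.ssubset_of_ne (hF.ne hij))
  have := hc i
  have := hc j
  omega

lemma le_choose_sigmaFn (n : ℕ) : n ≤ (sigmaFn n).choose ((sigmaFn n + 1) / 2) := by
  have hne : {k | n ≤ Nat.choose k ((k + 1) / 2)}.Nonempty := by
    refine ⟨2 * n, ?_⟩
    have h := Nat.choose_le_middle 1 (2 * n)
    rw [Nat.choose_one_right] at h
    have e : (2 * n + 1) / 2 = 2 * n / 2 := by omega
    rw [Set.mem_ofPred_eq, e]
    omega
  exact Nat.sInf_mem hne

theorem Cn_coverable (n : ℕ) (hn : 7 ≤ n) :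
    Coverable3 (Cmat n) (sigmaFn n - 1) (sigmaFn n - 1) 1 := by
  classical
  have hk := le_choose_sigmaFn n
  have hk5 : 5 ≤ sigmaFn n := by
    by_contra! hlt
    generalize sigmaFn n = k at hk hlt
    interval_cases k <;> simp [Nat.choose] at hk <;> omega
  obtain ⟨m, hm⟩ : ∃ m, sigmaFn n = m + 1 := ⟨sigmaFn n - 1, by omega⟩
  rw [hm] at hk hk5 ⊢
  rw [Nat.add_sub_cancel]
  obtain ⟨r, hr⟩ : ∃ r, r = m / 2 := ⟨_, rfl⟩
  have hr1 : (m + 1 + 1) / 2 = r + 1 := by omega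
  rw [hr1, Nat.choose_succ_succ] at hk
  let L : Finset (Finset (Fin m)) :=
    Finset.powersetCard r Finset.univ ∪ Finset.powersetCard (r + 1) Finset.univ
  have hL : n ≤ L.card := by
    rw [Finset.card_union_of_disjoint (Finset.pairwise_disjoint_powersetCard _ (by simp))]
    simpa using hk
  obtain ⟨F, hF, hc⟩ : ∃ F : Fin n → Finset (Fin m), Function.Injective F ∧
      ∀ i, (F i).card = r ∨ (F i).card = r + 1 := by
    obtain ⟨e⟩ : Nonempty (Fin n ↪ L) :=
      Function.Embedding.nonempty_of_card_le (by simpa using hL)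
    refine ⟨fun i => (e i).1, Subtype.val_injective.comp e.injective, fun i => ?_⟩
    rcases Finset.mem_union.1 (e i).2 with h | h
    · exact Or.inl (Finset.mem_powersetCard.1 h).2
    · exact Or.inr (Finset.mem_powersetCard.1 h).2
  obtain ⟨f, hf, hfd⟩ := exists_disjoint_injection m r (by omega)
  let G : Fin n → Finset (Fin m) := fun i => if h : (F i).card = r then f ⟨F i, h⟩ else F i
  have hGr : ∀ i (h : (F i).card = r), G i = f ⟨F i, h⟩ := fun i h => dif_pos h
  have hGs : ∀ i, (F i).card = r + 1 → G i = F i := fun i h => dif_neg (by omega)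
  have hGc : ∀ i, (G i).card = (F i).card := by
    intro i
    rcases hc i with h | h
    · rw [hGr i h, (hfd _).1, h]
    · rw [hGs i h]
  have hG : Function.Injective G := by
    intro i j hij
    have hcard : (F i).card = (F j).card := by rw [← hGc, ← hGc, hij]
    rcases hc i with h | h
    · rw [hGr i h, hGr j (hcard ▸ h)] at hij
      exact hF (congrArg Subtype.val (hf hij))
    · rw [hGs i h, hGs j (hcard ▸ h)] at hij
      exact hF hij
  refine ⟨fun i j => decide (¬ F i ⊆ F j), fun i j => decide (¬ G i ⊆ G j),
    fun i j => decide ((F i).card = r) && decide ((F j).card = r + 1),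
    RB_notSubset_le F, RB_notSubset_le G,
    RB_le_of_rectangles _ (fun _ i => decide ((F i).card = r))
      (fun _ j => decide ((F j).card = r + 1)) (fun i j => by simp), ?_, ?_, ?_⟩
  · intro i j
    simp only [Cmat, decide_eq_true_eq]
    constructor
    · intro hij
      by_contra! hcon
      obtain ⟨h1, h2⟩ := hcon
      obtain ⟨hi, hj⟩ := card_of_subset_of_ne F hF hc hij h1
      rw [hGr i hi, hGs j hj] at h2
      obtain ⟨h3, h4⟩ := hfd ⟨F i, hi⟩
      have h5 := Finset.card_le_card (Finset.union_subset h1 h2)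
      rw [Finset.card_union_of_disjoint h4, h3, hi, hj] at h5
      omega
    · rintro h rfl
      simp at h
  · intro i j
    simp only [Cmat, decide_eq_true_eq, Bool.and_eq_true]
    constructor
    · intro hij
      by_cases h : F i ⊆ F j
      · exact Or.inr (card_of_subset_of_ne F hF hc hij h)
      · exact Or.inl h
    · rintro (h | h) rfl
      · exact h subset_rfl
      · omega
  · intro i j
    simp only [Cmat, decide_eq_true_eq, Bool.and_eq_true]
    constructor
    · intro hij
      by_cases h : G i ⊆ G j
      · have := card_of_subset_of_ne G hG (fun i => by rw [hGc]; exact hc i) hij h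
        rw [hGc, hGc] at this
        exact Or.inr this
      · exact Or.inl h
    · rintro (h | h) rfl
      · exact h subset_rfl
      · omega
end

section
/- For all integers n, m ≥ 7, it holds that R_B(C_n ⊗ C_m) < R_B(C_n) · R_B(C_m). More precisely, R_B(C_n ⊗ C_m) ≤ σ(n)·σ(m) − 1. -/
/-- Empty rectangles may be allowed in a cover: dropping them only shortens it. -/
lemma exists_cover {α β ι : Type*} [Fintype ι] (A : Matrix α β Bool)
    (u : ι → α → Prop) (v : ι → β → Prop)
    (h : ∀ i j, A i j = true ↔ ∃ t, u t i ∧ v t j) :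
    ∃ s ≤ Fintype.card ι,
      ∃ M : Fin s → Matrix α β Bool, (∀ t, IsRank1 (M t)) ∧ BCovers M A := by
  classical
  let κ := {t : ι // (∃ i, u t i) ∧ ∃ j, v t j}
  let e := Fintype.equivFin κ
  refine ⟨Fintype.card κ, Fintype.card_subtype_le _,
    fun t i j => decide (u (e.symm t).1 i) && decide (v (e.symm t).1 j), ?_, ?_⟩
  · intro t
    obtain ⟨⟨i, hi⟩, ⟨j, hj⟩⟩ := (e.symm t).2
    exact ⟨⟨i, j, by simp [hi, hj]⟩, fun i => decide (u (e.symm t).1 i),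
      fun j => decide (v (e.symm t).1 j), fun _ _ => rfl⟩
  · intro i j
    rw [h]
    constructor
    · rintro ⟨t, hu, hv⟩
      exact ⟨e ⟨t, ⟨i, hu⟩, ⟨j, hv⟩⟩, by simp [hu, hv]⟩
    · rintro ⟨t, ht⟩
      simp only [Bool.and_eq_true, decide_eq_true_eq] at ht
      exact ⟨_, ht⟩

lemma sigma_spec (n : ℕ) : n ≤ Nat.choose (sigmaFn n) ((sigmaFn n + 1) / 2) := by
  have hne : {k | n ≤ Nat.choose k ((k + 1) / 2)}.Nonempty := by
    refine ⟨n, ?_⟩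
    have h := Nat.choose_le_middle 1 n
    rw [Nat.choose_one_right, ← Nat.choose_symm (Nat.div_le_self n 2)] at h
    rwa [show n - n / 2 = (n + 1) / 2 by omega] at h
  exact Nat.sInf_mem hne

/-- The sets of rectangles meeting the individual rows of `C_n` form an antichain, so Sperner's
theorem bounds `n`. -/
lemma sigma_le_RB (n : ℕ) : sigmaFn n ≤ RB (Cmat n) := by
  -- Without a finite cover, `RB` would be the junk value `sInf ∅ = 0`.
  have hne : {s | ∃ M : Fin s → Matrix (Fin n) (Fin n) Bool,
      (∀ t, IsRank1 (M t)) ∧ BCovers M (Cmat n)}.Nonempty := by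
    obtain ⟨s, -, hs⟩ := exists_cover (Cmat n) (fun t i : Fin n => i = t) (fun t j => j ≠ t)
      (fun i j => by
        simp only [Cmat, decide_eq_true_eq]
        exact ⟨fun h => ⟨i, rfl, h.symm⟩, by rintro ⟨t, rfl, h⟩; exact h.symm⟩)
    exact ⟨s, hs⟩
  refine le_csInf hne ?_
  rintro s ⟨M, hM, hc⟩
  choose hM u v huv using hM
  refine Nat.sInf_le ?_
  change n ≤ _
  let R : Fin n → Finset (Fin s) := fun i => Finset.univ.filter fun t => u t i = true
  have hR : ∀ i j, R i ⊆ R j → i = j := by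
    intro i j hij
    by_contra hne'
    obtain ⟨t, ht⟩ := (hc i j).1 (by simpa [Cmat] using hne')
    rw [huv, Bool.and_eq_true] at ht
    have htj : u t j = true := by
      have := hij (show t ∈ R i by simpa [R] using ht.1)
      simpa [R] using this
    -- The rectangle `t` would then contain the diagonal entry at `j`.
    have hjj := (hc j j).2 ⟨t, by rw [huv, htj, ht.2]; rfl⟩
    simp [Cmat] at hjj
  have hanti : IsAntichain (· ⊆ ·) (SetLike.coe (Finset.univ.image R)) := by
    intro X hX Y hY hXY hsub
    simp only [Finset.coe_image, Finset.coe_univ, Set.image_univ, Set.mem_range] at hX hY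
    obtain ⟨i, rfl⟩ := hX
    obtain ⟨j, rfl⟩ := hY
    exact hXY (congrArg R (hR i j hsub))
  have h := hanti.sperner
  rw [Finset.card_image_of_injective _ fun i j hij => hR i j hij.le, Finset.card_univ,
    Fintype.card_fin, Fintype.card_fin, ← Nat.choose_symm (Nat.div_le_self s 2)] at h
  rwa [show s - s / 2 = (s + 1) / 2 by omega] at h

lemma exists_disjoint_injection_s13 (d p : ℕ) (h : 2 * p ≤ d) :
    ∃ π : {S : Finset (Fin d) // S.card = p} → {S : Finset (Fin d) // S.card = p},
      Function.Injective π ∧ ∀ S, Disjoint S.1 (π S).1 := by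
  classical
  let N : {S : Finset (Fin d) // S.card = p} → Finset {S : Finset (Fin d) // S.card = p} :=
    fun S => Finset.univ.filter fun U => Disjoint S.1 U.1
  have hN : ∀ S, (N S).card = (d - p).choose p := by
    intro S
    have : ((N S).map (Function.Embedding.subtype _)) = Finset.powersetCard p S.1ᶜ := by
      ext U
      simp only [N, Finset.mem_map, Finset.mem_filter, Finset.mem_univ, true_and,
        Function.Embedding.coe_subtype, Subtype.exists, exists_and_right, exists_eq_right,
        Finset.mem_powersetCard, Finset.subset_compl_iff_disjoint_left]
      tauto
    rw [← Finset.card_map, this, Finset.card_powersetCard, Finset.card_compl, S.2,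
      Fintype.card_fin]
  have hpos : 0 < (d - p).choose p := Nat.choose_pos (by omega)
  obtain ⟨π, hπ, hd⟩ := (Finset.all_card_le_biUnion_card_iff_exists_injective N).1 (by
    intro s
    refine Nat.le_of_mul_le_mul_right (c := (d - p).choose p) ?_ hpos
    refine Finset.card_mul_le_card_mul (fun S U => Disjoint S.1 U.1) ?_ ?_
    · intro S hS
      rw [← hN S]
      refine Finset.card_le_card fun U hU => ?_
      simp only [Finset.mem_bipartiteAbove, Finset.mem_biUnion]
      exact ⟨⟨S, hS, hU⟩, by simpa [N] using hU⟩
    · intro U _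
      rw [← hN U]
      refine Finset.card_le_card fun S hS => ?_
      simp only [Finset.mem_bipartiteBelow] at hS
      simpa [N] using hS.2.symm)
  exact ⟨π, hπ, fun S => by simpa [N] using hd S⟩

/-- The `(1, σ(n) - 1, σ(n) - 1)`-coverability of `C_n`. The rectangle is given by the set `a` of
its rows, whose complement is the set of its columns; the two matrices of rank at most
`d = σ(n) - 1` are given by labellings `f` and `g`, their entries being the non-inclusions. -/
lemma exists_triple (n : ℕ) (hn : 7 ≤ n) :
    ∃ d, sigmaFn n = d + 1 ∧ ∃ (a : Fin n → Prop) (f g : Fin n → Finset (Fin d)),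
      ∀ i j, i ≠ j → ((a i ∧ ¬ a j) ∨ ¬ f i ⊆ f j) ∧ ((a i ∧ ¬ a j) ∨ ¬ g i ⊆ g j) ∧
        (¬ f i ⊆ f j ∨ ¬ g i ⊆ g j) := by
  have hs := sigma_spec n
  have h5 : 5 ≤ sigmaFn n := by
    by_contra! hlt
    interval_cases sigmaFn n <;> simp [Nat.choose] at hs <;> omega
  obtain ⟨d, hd⟩ : ∃ d, sigmaFn n = d + 1 := ⟨sigmaFn n - 1, by omega⟩
  obtain ⟨p, hp⟩ : ∃ p, (sigmaFn n + 1) / 2 = p + 1 := ⟨(sigmaFn n + 1) / 2 - 1, by omega⟩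
  refine ⟨d, hd, ?_⟩
  obtain ⟨π, hπ, hdis⟩ := exists_disjoint_injection_s13 d p (by omega)
  rw [hp, hd, Nat.choose_succ_succ] at hs
  obtain ⟨φ⟩ : Nonempty (Fin n ↪
      {S : Finset (Fin d) // S.card = p} ⊕ {T : Finset (Fin d) // T.card = p + 1}) := by
    apply Function.Embedding.nonempty_of_card_le
    simpa [Fintype.card_finset_len] using hs
  refine ⟨fun i => (φ i).isLeft, fun i => Sum.elim Subtype.val Subtype.val (φ i),
    fun i => Sum.elim (fun S => (π S).1) Subtype.val (φ i), fun i j hij => ?_⟩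
  have hne : φ i ≠ φ j := fun h => hij (φ.injective h)
  have key : ∀ {X Y : Finset (Fin d)}, X.card = Y.card → X ⊆ Y → X = Y :=
    fun h hs => Finset.eq_of_subset_of_card_le hs h.ge
  rcases hi : φ i with S | T <;> rcases hj : φ j with S' | T' <;> rw [hi, hj] at hne <;>
    simp only [hi, hj, Sum.elim_inl, Sum.elim_inr, Sum.isLeft_inl, Sum.isLeft_inr]
  · have h1 : ¬ S.1 ⊆ S'.1 := fun h =>
      hne (congrArg Sum.inl (Subtype.ext (key (S.2.trans S'.2.symm) h)))
    have h2 : ¬ (π S).1 ⊆ (π S').1 := fun h =>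
      hne (congrArg Sum.inl (hπ (Subtype.ext (key ((π S).2.trans (π S').2.symm) h))))
    tauto
  · have h3 : ¬ (S.1 ⊆ T'.1 ∧ (π S).1 ⊆ T'.1) := by
      rintro ⟨h1, h2⟩
      have h := Finset.card_le_card (Finset.union_subset h1 h2)
      rw [Finset.card_union_of_disjoint (hdis S), S.2, (π S).2, T'.2] at h
      omega
    simp only [Bool.false_eq_true]
    tauto
  · have h1 : ¬ T.1 ⊆ S'.1 := fun h => by
      have := Finset.card_le_card h
      rw [T.2, S'.2] at this
      omega
    have h2 : ¬ T.1 ⊆ (π S').1 := fun h => by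
      have := Finset.card_le_card h
      rw [T.2, (π S').2] at this
      omega
    tauto
  · have h1 : ¬ T.1 ⊆ T'.1 := fun h =>
      hne (congrArg Sum.inr (Subtype.ext (key (T.2.trans T'.2.symm) h)))
    tauto

/-- If at least two of `P₁, P₂, P₃` and at least two of `Q₁, Q₂, Q₃` hold, then some `P` and `Q`
with a common index hold. -/
lemma common_index {P₁ P₂ P₃ Q₁ Q₂ Q₃ : Prop} (h₁₂ : P₁ ∨ P₂) (h₁₃ : P₁ ∨ P₃) (h₂₃ : P₂ ∨ P₃)
    (k₁₂ : Q₁ ∨ Q₂) (k₁₃ : Q₁ ∨ Q₃) (k₂₃ : Q₂ ∨ Q₃) :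
    (P₁ ∧ Q₁) ∨ (P₂ ∧ Q₂) ∨ (P₃ ∧ Q₃) := by
  grind

lemma RB_kron_le (n m : ℕ) (hn : 7 ≤ n) (hm : 7 ≤ m) :
    RB (bkron (Cmat n) (Cmat m)) ≤ sigmaFn n * sigmaFn m - 1 := by
  obtain ⟨d, hd, a, f, g, H⟩ := exists_triple n hn
  obtain ⟨e, he, b, f', g', H'⟩ := exists_triple m hm
  -- The triples are aligned as `(a, f, g)` against `(f', b, g')`.
  obtain ⟨s, hs, hM⟩ := exists_cover (ι := Fin e ⊕ Fin d ⊕ Fin d × Fin e)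
    (bkron (Cmat n) (Cmat m))
    (fun t i => Sum.elim (fun y => a i.1 ∧ y ∈ f' i.2)
      (Sum.elim (fun x => x ∈ f i.1 ∧ b i.2) (fun z => z.1 ∈ g i.1 ∧ z.2 ∈ g' i.2)) t)
    (fun t j => Sum.elim (fun y => ¬ a j.1 ∧ y ∉ f' j.2)
      (Sum.elim (fun x => x ∉ f j.1 ∧ ¬ b j.2) (fun z => z.1 ∉ g j.1 ∧ z.2 ∉ g' j.2)) t)
    (by
      rintro ⟨i, i'⟩ ⟨j, j'⟩
      simp only [bkron, Cmat, Bool.and_eq_true, decide_eq_true_eq, Sum.exists, Sum.elim_inl,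
        Sum.elim_inr, Prod.exists]
      constructor
      · rintro ⟨hij, hij'⟩
        obtain ⟨h₁₂, h₁₃, h₂₃⟩ := H i j hij
        obtain ⟨k₁₂, k₂₃, k₁₃⟩ := H' i' j' hij'
        have hcases := common_index h₁₂ h₁₃ h₂₃ k₁₂.symm k₁₃ k₂₃
        simp only [Finset.not_subset] at hcases
        rcases hcases with ⟨⟨h1, h2⟩, y, h3, h4⟩ | ⟨⟨x, h1, h2⟩, h3, h4⟩ |
          ⟨⟨x, h1, h2⟩, y, h3, h4⟩
        · exact Or.inl ⟨y, ⟨h1, h3⟩, h2, h4⟩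
        · exact Or.inr (Or.inl ⟨x, ⟨h1, h3⟩, h2, h4⟩)
        · exact Or.inr (Or.inr ⟨x, y, ⟨h1, h3⟩, h2, h4⟩)
      · rintro (⟨y, ⟨h1, h2⟩, h3, h4⟩ | ⟨x, ⟨h1, h2⟩, h3, h4⟩ | ⟨x, y, ⟨h1, h2⟩, h3, h4⟩) <;>
          constructor <;> rintro rfl <;> contradiction)
  refine (Nat.sInf_le hM).trans (hs.trans ?_)
  simp only [Fintype.card_sum, Fintype.card_prod, Fintype.card_fin, hd, he]
  rw [show (d + 1) * (e + 1) = e + (d + d * e) + 1 by ring]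
  rfl

theorem rank_kronecker_Cn_Cm_strict (n m : ℕ) (hn : 7 ≤ n) (hm : 7 ≤ m) :
    RB (bkron (Cmat n) (Cmat m)) < RB (Cmat n) * RB (Cmat m) ∧
    RB (bkron (Cmat n) (Cmat m)) ≤ sigmaFn n * sigmaFn m - 1 := by
  have h := RB_kron_le n m hn hm
  refine ⟨?_, h⟩
  have hpos : 0 < sigmaFn n * sigmaFn m := by
    obtain ⟨d, hd, -⟩ := exists_triple n hn
    obtain ⟨e, he, -⟩ := exists_triple m hm
    rw [hd, he]
    positivity
  have hmul := Nat.mul_le_mul (sigma_le_RB n) (sigma_le_RB m)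
  omega
end

section
/- The matrix C_5 is (2, 2, 3)-coverable, i.e., there exist three 5 × 5 0,1-matrices A_1, A_2, A_3 with R_B(A_1) ≤ 2, R_B(A_2) ≤ 2, R_B(A_3) ≤ 3 such that every two of them cover C_5. -/
/-- The union over `t` of the rectangles `S t × (S t)ᶜ`, as a Boolean matrix. -/
def cutUnion {n s : ℕ} (S : Fin s → Finset (Fin n)) : Matrix (Fin n) (Fin n) Bool :=
  fun i j => decide (∃ t, i ∈ S t ∧ j ∉ S t)

lemma RB_cutUnion_le {n s : ℕ} (S : Fin s → Finset (Fin n))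
    (hS : ∀ t, ∃ i j, i ∈ S t ∧ j ∉ S t) : RB (cutUnion S) ≤ s := by
  refine Nat.sInf_le ⟨fun t i j => decide (i ∈ S t) && decide (j ∉ S t), fun t => ⟨?_, ?_⟩, ?_⟩
  · obtain ⟨i, j, hi, hj⟩ := hS t
    exact ⟨i, j, by simp [hi, hj]⟩
  · exact ⟨fun i => decide (i ∈ S t), fun j => decide (j ∉ S t), fun _ _ => rfl⟩
  · intro i j
    simp [cutUnion]

/-- Two unions of cuts cover `Cmat n` as soon as they separate all pairs `i ≠ j`; the converse
inclusion holds because a cut never meets the diagonal. -/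
lemma cutUnion_cover {n s s' : ℕ} (S : Fin s → Finset (Fin n)) (S' : Fin s' → Finset (Fin n))
    (h : ∀ i j, i ≠ j → (∃ t, i ∈ S t ∧ j ∉ S t) ∨ ∃ t, i ∈ S' t ∧ j ∉ S' t) (i j : Fin n) :
    Cmat n i j = true ↔ (cutUnion S i j = true ∨ cutUnion S' i j = true) := by
  simp only [Cmat, cutUnion, decide_eq_true_eq]
  refine ⟨h i j, ?_⟩
  rintro (⟨t, hi, hj⟩ | ⟨t, hi, hj⟩) rfl
  exacts [hj hi, hj hi]

theorem C5_coverable : Coverable3 (Cmat 5) 2 2 3 := by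
  refine ⟨cutUnion ![{0, 1}, {2, 3}], cutUnion ![{0, 2, 4}, {1, 3, 4}],
    cutUnion ![{1, 2}, {0, 3}, {4}], RB_cutUnion_le _ ?_, RB_cutUnion_le _ ?_,
    RB_cutUnion_le _ ?_, cutUnion_cover _ _ ?_, cutUnion_cover _ _ ?_, cutUnion_cover _ _ ?_⟩ <;>
  decide
end

section
/- The Boolean rank of the Kronecker product of C_4 and C_5 equals 14, i.e., R_B(C_4 ⊗ C_5) = 14. -/
/-- Four sets indexed by `Fin 4`, none contained in another, live on at least four points. This is
Sperner's theorem together with `n.choose (n / 2) < 4` for `n ≤ 3`. -/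
lemma four_le_card_of_antichain {ι : Type*} [DecidableEq ι] (T : Finset ι)
    (S : Fin 4 → ι → Prop) (hS : ∀ i j, i ≠ j → ∃ t ∈ T, S i t ∧ ¬ S j t) : 4 ≤ T.card := by
  classical
  let F : Fin 4 → Finset T := fun i => Finset.univ.filter (fun t : T => S i t)
  have hF : ∀ i j, i ≠ j → ¬ F i ⊆ F j := by
    intro i j hij hsub
    obtain ⟨t, ht, h1, h2⟩ := hS i j hij
    have : (⟨t, ht⟩ : T) ∈ F j := hsub (by simp [F, h1])
    exact h2 (by simpa [F] using this)
  have hinj : Function.Injective F := by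
    intro i j h
    by_contra hij
    exact hF i j hij h.subset
  have hanti : IsAntichain (· ⊆ ·) ((Finset.univ.image F : Finset (Finset T)) : Set (Finset T)) := by
    intro a ha b hb hab
    simp only [Finset.coe_image, Finset.coe_univ, Set.image_univ, Set.mem_range] at ha hb
    obtain ⟨i, rfl⟩ := ha
    obtain ⟨j, rfl⟩ := hb
    exact hF i j (fun h => hab (by rw [h]))
  have h := hanti.sperner
  rw [Finset.card_image_of_injective _ hinj, Finset.card_univ, Fintype.card_fin,
    Fintype.card_coe] at h
  by_contra! hlt
  interval_cases T.card <;> simp at h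

lemma fourteen_le_of_cover {s : ℕ} (M : Fin s → Matrix (Fin 4 × Fin 5) (Fin 4 × Fin 5) Bool)
    (hM : ∀ t, IsRank1 (M t)) (hc : BCovers M (bkron (Cmat 4) (Cmat 5))) : 14 ≤ s := by
  classical
  choose u v huv using fun t => (hM t).2
  have hones : ∀ t i j, u t i = true → v t j = true → i.1 ≠ j.1 ∧ i.2 ≠ j.2 := by
    intro t i j hi hj
    have := (hc i j).2 ⟨t, by simp [huv, hi, hj]⟩
    simpa [bkron, Cmat] using this
  have hcov : ∀ i j : Fin 4 × Fin 5, i.1 ≠ j.1 → i.2 ≠ j.2 →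
      ∃ t, u t i = true ∧ v t j = true := by
    intro i j h1 h2
    obtain ⟨t, ht⟩ := (hc i j).1 (by simp [bkron, Cmat, h1, h2])
    exact ⟨t, by simpa [huv] using ht⟩
  let Q : Fin s → Finset (Fin 5) := fun t => Finset.univ.filter fun k => ∃ i, u t (i, k) = true
  let R : Fin s → Finset (Fin 5) := fun t => Finset.univ.filter fun l => ∃ j, v t (j, l) = true
  have hQR : ∀ t, (Q t ×ˢ R t).card ≤ 6 := by
    intro t
    have hd : Disjoint (Q t) (R t) := by
      rw [Finset.disjoint_left]
      intro k hk hl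
      obtain ⟨i, hi⟩ := (Finset.mem_filter.1 hk).2
      obtain ⟨j, hj⟩ := (Finset.mem_filter.1 hl).2
      exact (hones t _ _ hi hj).2 rfl
    have h5 : (Q t).card + (R t).card ≤ 5 := by
      rw [← Finset.card_union_of_disjoint hd]
      exact (Finset.card_le_univ _).trans (by simp)
    rw [Finset.card_product]
    have : (Q t).card ≤ 5 := by omega
    interval_cases (Q t).card <;> omega
  have hfour : ∀ p ∈ (Finset.univ : Finset (Fin 5)).offDiag,
      4 ≤ (Finset.univ.filter fun t => p ∈ Q t ×ˢ R t).card := by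
    rintro ⟨k, l⟩ hp
    have hkl : k ≠ l := (Finset.mem_offDiag.1 hp).2.2
    apply four_le_card_of_antichain _ (fun i t => u t (i, k) = true)
    intro i j hij
    obtain ⟨t, h1, h2⟩ := hcov (i, k) (j, l) hij hkl
    refine ⟨t, ?_, h1, fun h3 => (hones t _ _ h3 h2).1 rfl⟩
    simp only [Finset.mem_filter, Finset.mem_univ, true_and, Finset.mem_product, Q, R]
    exact ⟨⟨i, h1⟩, ⟨j, h2⟩⟩
  have hcount : (Finset.univ : Finset (Fin 5)).offDiag.card * 4 ≤
      (Finset.univ : Finset (Fin s)).card * 6 :=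
    Finset.card_mul_le_card_mul (fun p t => p ∈ Q t ×ˢ R t) hfour fun t _ =>
      (Finset.card_le_card fun p hp => (Finset.mem_filter.1 hp).2).trans (hQR t)
  simp [Finset.offDiag_card] at hcount
  omega

/-- The `Fin 4` sides of the 14 rectangles, as bit masks: both parts of the splits
`{0,2} | {1,3}` (three times), `{0,1} | {2,3}` (twice) and `{1,2} | {0,3}` (twice). -/
def coverP : Fin 14 → ℕ := ![5, 5, 5, 10, 10, 10, 3, 3, 12, 12, 6, 6, 9, 9]

/-- The `Fin 5` sides of the 14 rectangles, as bit masks: `{1,2}, {0,3}, {4}` for the first split,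
`{1,3,4}, {0,2,4}` for the second and `{2,3}, {0,1}` for the third. -/
def coverQ : Fin 14 → ℕ := ![6, 9, 16, 6, 9, 16, 26, 21, 26, 21, 12, 3, 12, 3]

/-- The matrix with 1-entries `(P × Q) × (Pᶜ × Qᶜ)` for the `t`-th pair `(P, Q)` of masks. -/
def coverM (t : Fin 14) : Matrix (Fin 4 × Fin 5) (Fin 4 × Fin 5) Bool := fun i j =>
  ((coverP t).testBit i.1 && (coverQ t).testBit i.2) &&
    (!(coverP t).testBit j.1 && !(coverQ t).testBit j.2)

lemma coverM_nonzero : ∀ t : Fin 14, ∃ i : Fin 4, ∃ k : Fin 5, ∃ j : Fin 4, ∃ l : Fin 5,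
    coverM t (i, k) (j, l) = true := by
  decide +kernel

lemma coverM_covers : ∀ (i : Fin 4) (k : Fin 5) (j : Fin 4) (l : Fin 5),
    bkron (Cmat 4) (Cmat 5) (i, k) (j, l) = true ↔ ∃ t, coverM t (i, k) (j, l) = true := by
  unfold bkron Cmat
  decide +kernel

theorem rank_C4_C5 : RB (bkron (Cmat 4) (Cmat 5)) = 14 := by
  have hmem : 14 ∈ {s | ∃ M : Fin s → Matrix (Fin 4 × Fin 5) (Fin 4 × Fin 5) Bool,
      (∀ t, IsRank1 (M t)) ∧ BCovers M (bkron (Cmat 4) (Cmat 5))} := by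
    refine ⟨coverM, fun t => ⟨?_, _, _, fun i j => rfl⟩, fun i j => coverM_covers i.1 i.2 j.1 j.2⟩
    obtain ⟨i, k, j, l, h⟩ := coverM_nonzero t
    exact ⟨(i, k), (j, l), h⟩
  refine le_antisymm (Nat.sInf_le hmem) (le_csInf ⟨14, hmem⟩ ?_)
  rintro s ⟨M, hM, hc⟩
  exact fourteen_le_of_cover M hM hc
end

section
/- There exists an integer d_0 such that for every integer d ≥ d_0 and every integer q ≥ 2, setting n = ((1/2) · binom(2d, d))^q, there exist n^{1/q} − 1 = (1/2)·binom(2d, d) − 1 many 0,1-matrices of size n × n, each of Boolean rank at most 2d, such that every q of them cover C_n. -/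
lemma RB_ne_le {α γ : Type*} [Fintype γ] [DecidableEq γ] (d : ℕ)
    (hγ : Fintype.card γ ≤ Nat.choose (2 * d) d) (f : α → γ) :
    RB (fun i j => decide (f i ≠ f j) : Matrix α α Bool) ≤ 2 * d := by
  classical
  have hcard : Fintype.card γ ≤
      Fintype.card (Finset.powersetCard d (Finset.univ : Finset (Fin (2 * d)))) := by
    simpa using hγ
  obtain ⟨S⟩ := Function.Embedding.nonempty_of_card_le hcard
  refine RB_le_of_rectangles _ (fun t i => decide (t ∈ (S (f i)).1))
    (fun t j => decide (t ∉ (S (f j)).1)) fun i j => ?_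
  have hc : ∀ a, (S a).1.card = d := fun a => (Finset.mem_powersetCard.1 (S a).2).2
  simp only [Bool.and_eq_true, decide_eq_true_eq]
  constructor
  · intro hne
    by_contra! hcon
    exact hne (S.injective (Subtype.ext
      (Finset.eq_of_subset_of_card_le hcon (by rw [hc, hc]))))
  · rintro ⟨t, h1, h2⟩ he
    rw [he] at h1
    exact h2 h1

theorem exists_q_wise_cover :
    ∃ d0 : ℕ, ∀ d : ℕ, d0 ≤ d → ∀ q : ℕ, 2 ≤ q →
      ∃ Ms : Fin (Nat.choose (2 * d) d / 2 - 1) →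
          Matrix (Fin ((Nat.choose (2 * d) d / 2) ^ q))
            (Fin ((Nat.choose (2 * d) d / 2) ^ q)) Bool,
        (∀ t, RB (Ms t) ≤ 2 * d) ∧
        ∀ T : Finset (Fin (Nat.choose (2 * d) d / 2 - 1)), T.card = q →
          ∀ i j, Cmat ((Nat.choose (2 * d) d / 2) ^ q) i j = true ↔
            ∃ t ∈ T, Ms t i j = true := by
  refine ⟨1, fun d hd q _ => ?_⟩
  have h2 : 2 ≤ Nat.choose (2 * d) d := Nat.two_le_centralBinom d hd
  have hm : Nat.choose (2 * d) d / 2 ≠ 0 := by omega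
  have h2m : 2 * (Nat.choose (2 * d) d / 2) ≤ Nat.choose (2 * d) d := by omega
  generalize Nat.choose (2 * d) d / 2 = m at hm h2m ⊢
  obtain ⟨p, hp, hmp, hp2⟩ := Nat.exists_prime_lt_and_le_two_mul m hm
  haveI : Fact p.Prime := ⟨hp⟩
  have hcard : Fintype.card (Fin (m ^ q)) ≤ Fintype.card (Fin q → ZMod p) := by
    simpa [ZMod.card] using Nat.pow_le_pow_left hmp.le q
  obtain ⟨e⟩ := Function.Embedding.nonempty_of_card_le hcard
  let P : Fin (m ^ q) → Polynomial.degreeLT (ZMod p) q :=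
    fun i => (Polynomial.degreeLTEquiv (ZMod p) q).symm (e i)
  have hPinj : Function.Injective P :=
    (Polynomial.degreeLTEquiv (ZMod p) q).symm.injective.comp e.injective
  refine ⟨fun t i j => decide ((P i).1.eval ((t : ℕ) : ZMod p) ≠ (P j).1.eval ((t : ℕ) : ZMod p)),
    fun t => RB_ne_le d (by rw [ZMod.card]; omega) _, fun T hT i j => ?_⟩
  simp only [Cmat, decide_eq_true_eq]
  constructor
  · intro hne
    by_contra! hcon
    -- the evaluation points are distinct because `m - 1 < p`
    have hinj : Set.InjOn (fun t : Fin (m - 1) => ((t : ℕ) : ZMod p)) T := by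
      intro a _ b _ hab
      have := (ZMod.natCast_eq_natCast_iff' _ _ _).1 hab
      rw [Nat.mod_eq_of_lt (by omega), Nat.mod_eq_of_lt (by omega)] at this
      exact Fin.ext this
    have hdeg : ∀ k, (P k).1.degree < T.card := fun k => by
      rw [hT]; exact Polynomial.mem_degreeLT.1 (P k).2
    exact hne (hPinj (Subtype.ext
      (Polynomial.eq_of_degrees_lt_of_eval_index_eq T hinj (hdeg i) (hdeg j) hcon)))
  · rintro ⟨t, -, ht⟩ rfl
    exact ht rfl
end

section
/- There exists a constant c > 0 such that for every integer n ≥ 2, R_B(C_n ⊗ C_n) ≤ c · k · log₂ k, where k = σ(n) = R_B(C_n). -/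
/-- Rectangles that are allowed to be empty still bound the Boolean rank: the empty ones can be
discarded. -/
lemma RB_le_of_cover {α β : Type*} (A : Matrix α β Bool) (s : ℕ)
    (u : Fin s → α → Bool) (v : Fin s → β → Bool)
    (h : ∀ i j, A i j = true ↔ ∃ t, (u t i && v t j) = true) : RB A ≤ s := by
  classical
  let S : Finset (Fin s) := Finset.univ.filter fun t => ∃ i j, (u t i && v t j) = true
  have hS : S.card ≤ s := by simpa using S.card_le_univ
  refine le_trans (Nat.sInf_le ?_) hS
  let e := S.equivFin
  refine ⟨fun t i j => u (e.symm t) i && v (e.symm t) j, fun t => ⟨?_, _, _, fun i j => rfl⟩,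
    fun i j => ?_⟩
  · exact (Finset.mem_filter.mp (e.symm t).2).2
  · rw [h]
    constructor
    · rintro ⟨t, ht⟩
      exact ⟨e ⟨t, Finset.mem_filter.mpr ⟨Finset.mem_univ _, i, j, ht⟩⟩, by simpa using ht⟩
    · rintro ⟨t, ht⟩
      exact ⟨_, ht⟩

/-- Greedy covering: if every point related to some element of `F` is related to at least a `1/16`
fraction of `F`, then any set of fewer than `(16/15) ^ T` such points is covered by `T` elements of
`F`. -/
lemma greedy_cover {P F : Type*} [Fintype F] [Nonempty F] (R : P → F → Prop)
    [∀ p f, Decidable (R p f)]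
    (hR : ∀ p, (∃ f, R p f) → Fintype.card F ≤ 16 * (Finset.univ.filter fun f => R p f).card)
    (T : ℕ) : ∀ U : Finset P, (∀ p ∈ U, ∃ f, R p f) → U.card * 15 ^ T < 16 ^ T →
      ∃ M : Fin T → F, ∀ p ∈ U, ∃ t, R p (M t) := by
  induction T with
  | zero =>
    intro U _ hU
    have : U = ∅ := by
      rw [← Finset.card_eq_zero]; simpa using hU
    exact ⟨fun t => t.elim0, by simp [this]⟩
  | succ T ih =>
    intro U hne hU
    -- Double counting of related pairs: the average element of `F` covers a `1/16` fraction of `U`.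
    obtain ⟨f, hf⟩ : ∃ f, U.card ≤ 16 * (U.filter fun p => R p f).card := by
      by_contra! hcon
      have h1 : ∑ f : F, 16 * (U.filter fun p => R p f).card < ∑ _f : F, U.card :=
        Finset.sum_lt_sum_of_nonempty Finset.univ_nonempty fun f _ => hcon f
      have h2 : ∑ _p ∈ U, Fintype.card F
          ≤ ∑ p ∈ U, 16 * (Finset.univ.filter fun f => R p f).card :=
        Finset.sum_le_sum fun p hp => hR p (hne p hp)
      have h3 : ∑ p ∈ U, (Finset.univ.filter fun f => R p f).card
          = ∑ f : F, (U.filter fun p => R p f).card :=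
        Finset.sum_card_bipartiteAbove_eq_sum_card_bipartiteBelow R
      rw [← Finset.mul_sum] at h1 h2
      simp only [Finset.sum_const, smul_eq_mul, Finset.card_univ] at h1 h2
      rw [h3] at h2
      rw [mul_comm U.card] at h2
      omega
    have hsplit := Finset.card_filter_add_card_filter_not (s := U) (fun p => R p f)
    obtain ⟨M, hM⟩ := ih (U.filter fun p => ¬ R p f)
      (fun p hp => hne p (Finset.mem_filter.mp hp).1) (by
        have h15 : 16 * (U.filter fun p => ¬ R p f).card ≤ 15 * U.card := by omega
        have := Nat.mul_le_mul_right (15 ^ T) h15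
        rw [pow_succ, pow_succ] at hU
        nlinarith)
    refine ⟨Fin.cons f M, fun p hp => ?_⟩
    by_cases hpf : R p f
    · exact ⟨0, by simpa using hpf⟩
    · obtain ⟨t, ht⟩ := hM p (Finset.mem_filter.mpr ⟨hp, hpf⟩)
      exact ⟨t.succ, by simpa using ht⟩

/-- At least a quarter of all two-colourings give `i` the colour `false` and `j` the colour `true`:
recolouring `i` and `j` is an at most four-to-one map onto these. -/
lemma card_separating {n : ℕ} {i j : Fin n} (hij : i ≠ j) :
    Fintype.card (Fin n → Bool) ≤
      4 * (Finset.univ.filter fun f : Fin n → Bool => f i = false ∧ f j = true).card := by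
  set S := Finset.univ.filter fun f : Fin n → Bool => f i = false ∧ f j = true
  have : Fintype.card (Fin n → Bool) ≤ (S ×ˢ (Finset.univ : Finset (Bool × Bool))).card := by
    rw [← Finset.card_univ]
    refine Finset.card_le_card_of_injOn
      (fun f => (Function.update (Function.update f i false) j true, f i, f j)) ?_ ?_
    · intro f _
      simp [S, hij]
    · intro f _ g _ hfg
      simp only [Prod.mk.injEq] at hfg
      obtain ⟨h, hi, hj⟩ := hfg
      funext x
      by_cases hxj : x = j
      · rw [hxj, hj]
      by_cases hxi : x = i
      · rw [hxi, hi]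
      simpa [hxj, hxi] using congrFun h x
  rw [Finset.card_product] at this
  simp at this ⊢
  omega

lemma RB_bkron_Cmat_le {n k : ℕ} (hk : 0 < k) (hn : n ≤ 2 ^ k) :
    RB (bkron (Cmat n) (Cmat n)) ≤ 44 * k := by
  classical
  let R : (Fin n × Fin n) × (Fin n × Fin n) → (Fin n → Bool) × (Fin n → Bool) → Prop :=
    fun p f => (f.1 p.1.1 = false ∧ f.1 p.2.1 = true) ∧ (f.2 p.1.2 = false ∧ f.2 p.2.2 = true)
  have hR : ∀ p, p.1.1 ≠ p.2.1 → p.1.2 ≠ p.2.2 →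
      Fintype.card ((Fin n → Bool) × (Fin n → Bool)) ≤
        16 * (Finset.univ.filter fun f => R p f).card := by
    intro p h1 h2
    have := Nat.mul_le_mul (card_separating h1) (card_separating h2)
    have hprod := Finset.filter_product (s := (Finset.univ : Finset (Fin n → Bool)))
      (t := (Finset.univ : Finset (Fin n → Bool)))
      (fun f => f p.1.1 = false ∧ f p.2.1 = true) (fun g => g p.1.2 = false ∧ g p.2.2 = true)
    rw [Finset.univ_product_univ] at hprod
    simp only [R]
    rw [Fintype.card_prod, hprod, Finset.card_product]
    linarith
  have hne : ∀ p f, R p f → p.1.1 ≠ p.2.1 ∧ p.1.2 ≠ p.2.2 := by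
    rintro p f ⟨⟨h1, h2⟩, h3, h4⟩
    constructor
    · intro h; rw [h, h2] at h1; cases h1
    · intro h; rw [h, h4] at h3; cases h3
  let U : Finset ((Fin n × Fin n) × (Fin n × Fin n)) :=
    Finset.univ.filter fun p => p.1.1 ≠ p.2.1 ∧ p.1.2 ≠ p.2.2
  have hU : U.card * 15 ^ (44 * k) < 16 ^ (44 * k) := by
    have h1 : U.card ≤ n ^ 4 := by
      refine U.card_le_univ.trans (le_of_eq ?_)
      simp only [Fintype.card_prod, Fintype.card_fin]
      ring
    have h2 : n ^ 4 ≤ 2 ^ (4 * k) := by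
      rw [mul_comm, pow_mul]
      exact Nat.pow_le_pow_left hn 4
    calc U.card * 15 ^ (44 * k) ≤ 2 ^ (4 * k) * 15 ^ (44 * k) :=
          Nat.mul_le_mul_right _ (h1.trans h2)
      _ = (2 * 15 ^ 11) ^ (4 * k) := by
          rw [mul_pow, ← pow_mul]; congr 2; ring
      _ < (16 ^ 11) ^ (4 * k) := Nat.pow_lt_pow_left (by norm_num) (by omega)
      _ = 16 ^ (44 * k) := by rw [← pow_mul]; congr 1; ring
  obtain ⟨M, hM⟩ := greedy_cover R
    (fun p ⟨f, hf⟩ => hR p (hne p f hf).1 (hne p f hf).2) (44 * k) U (by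
      intro p hp
      obtain ⟨-, h1, h2⟩ := Finset.mem_filter.mp hp
      exact ⟨(fun x => decide (x = p.2.1), fun x => decide (x = p.2.2)), by simp [R, h1, h2]⟩) hU
  refine RB_le_of_cover _ _ (fun t p => !(M t).1 p.1 && !(M t).2 p.2)
    (fun t q => (M t).1 q.1 && (M t).2 q.2) fun p q => ?_
  have key : ∀ t, ((!(M t).1 p.1 && !(M t).2 p.2) && ((M t).1 q.1 && (M t).2 q.2)) = true ↔
      R (p, q) (M t) := by
    intro t
    simp only [R, Bool.and_eq_true, Bool.not_eq_true']
    tauto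
  simp only [key]
  constructor
  · intro h
    exact hM (p, q) (Finset.mem_filter.mpr ⟨Finset.mem_univ _, by simpa [bkron, Cmat] using h⟩)
  · rintro ⟨t, ht⟩
    simpa [bkron, Cmat] using hne _ _ ht

theorem rank_kronecker_Cn_Cn_klogk :
    ∃ c : ℝ, 0 < c ∧ ∀ n : ℕ, 2 ≤ n →
      (RB (bkron (Cmat n) (Cmat n)) : ℝ) ≤
        c * (sigmaFn n : ℝ) * Real.logb 2 (sigmaFn n) := by
  refine ⟨44, by norm_num, fun n hn => ?_⟩
  have hs := le_choose_sigmaFn n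
  generalize sigmaFn n = k at hs ⊢
  have hk : 2 ≤ k := by
    by_contra! h
    interval_cases k <;> norm_num at hs <;> omega
  have hRB : (RB (bkron (Cmat n) (Cmat n)) : ℝ) ≤ 44 * k := by
    exact_mod_cast RB_bkron_Cmat_le (by omega) (hs.trans (Nat.choose_le_two_pow _ _))
  have hlog : 1 ≤ Real.logb 2 k := by
    rw [Real.le_logb_iff_rpow_le (by norm_num) (by positivity), Real.rpow_one]
    exact_mod_cast hk
  exact hRB.trans (le_mul_of_one_le_right (by positivity) hlog)
end
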